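/- Let G be a finite group of order n, A an abelian group, and m = |Ω| the number of ∼-classes in G×G. Then the pre-cohomology group pH²(G,A) = pZ²(G,A)/B²(G,A) is isomorphic to A^{m−n} ⊕ (A ⊗ G^{ab}), where G^{ab} = G/[G,G]. -/

import Mathlib

variable (G : Type*) [Group G] (A : Type*) [AddCommGroup A]

/-- The coboundary `δ²σ(x,y,z) = σ(y,z) − σ(xy,z) + σ(x,yz) − σ(x,y)`. -/
def d2 (σ : G → G → A) (x y z : G) : A :=
  σ y z - σ (x * y) z + σ x (y * z) - σ x y

variable {G A}

/-- A pre-cocycle: `δ²σ(x,y,z) = 0` whenever `1 ∈ {x,y,z,xy,yz,xyz}`. -/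
def IsPreCocycle (σ : G → G → A) : Prop :=
  ∀ x y z : G, (1 : G) ∈ ({x, y, z, x * y, y * z, x * y * z} : Set G) →
    d2 G A σ x y z = 0

variable (G A)

/-- The group `pZ²(G,A)` of pre-cocycles under pointwise addition. -/
def preZ2 : AddSubgroup (G → G → A) where
  carrier := {σ | IsPreCocycle σ}
  zero_mem' := by intro x y z _; simp [d2]
  add_mem' := by
    intro σ τ hσ hτ x y z h
    have h1 := hσ x y z h
    have h2 := hτ x y z h
    simp only [d2, Pi.add_apply] at *
    linear_combination (norm := abel1) h1 + h2
  neg_mem' := by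
    intro σ hσ x y z h
    have h1 := hσ x y z h
    simp only [d2, Pi.neg_apply] at *
    linear_combination (norm := abel1) -h1

/-- The generating relation `∼` on `G × G`. -/
inductive pairRel : G × G → G × G → Prop
  | left (g : G) : pairRel (g, 1) (1, 1)
  | right (g : G) : pairRel (1, g) (1, 1)
  | inv (g : G) : pairRel (g, g⁻¹) (g⁻¹, g)
  | cyc (g h : G) : g ≠ 1 → h ≠ 1 → h ≠ g⁻¹ →
      pairRel (g, h) (h, h⁻¹ * g⁻¹)
  | swap (g h : G) : g ≠ 1 → h ≠ 1 → h ≠ g⁻¹ →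
      pairRel (g, h) (h⁻¹, g⁻¹)

/-- The group `B²(G,A)` of coboundaries `δ¹ζ(g,h) = ζ(h) − ζ(gh) + ζ(g)`. -/
def cobound2 : AddSubgroup (G → G → A) where
  carrier := {σ | ∃ ζ : G → A, σ = fun g h => ζ h - ζ (g * h) + ζ g}
  zero_mem' := ⟨0, by funext g h; simp⟩
  add_mem' := by
    rintro σ τ ⟨ζ, rfl⟩ ⟨ξ, rfl⟩
    exact ⟨ζ + ξ, by funext g h; simp only [Pi.add_apply]; abel⟩
  neg_mem' := by
    rintro σ ⟨ζ, rfl⟩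
    exact ⟨-ζ, by funext g h; simp only [Pi.neg_apply]; abel⟩

/-!
Off the pairs `(g, 1)`, `(1, g)`, `(g, g⁻¹)`, the relation `∼` is generated by the rotation
`(g, h) ↦ (h, h⁻¹g⁻¹)` and the reflection `(g, h) ↦ (h⁻¹, g⁻¹)`. For a pre-cocycle `σ` the function
`τ (g, h) = σ (g, h) + σ (gh, (gh)⁻¹)` is invariant under rotation, and the sum of its values at a
pair and its reflection depends only on the values of `σ` at pairs `(x, x⁻¹)`. A rotation never
takes a nondegenerate pair to its reflection, so `τ`, and hence `σ`, can be prescribed freely at one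
representative of each class: `pZ²(G, A)` is `A^Ω`, the dual `Hom(ℤ^Ω, A)`. In these terms `δ¹` is
the transpose of a map `ℤ^Ω → ℤ^G`. Its cokernel is `G^{ab}`, because a function `ζ` whose
coboundary vanishes at the representatives satisfies `δ¹ζ = 0`, that is, is a homomorphism. By the
Smith normal form, the cokernel of the transpose of a map between free modules with torsion cokernel
`C` is `A^r ⊕ (A ⊗ C)`, where `r` is the rank of its kernel.
-/

section DualCokernel

open Module LinearMap
open scoped TensorProduct

variable {R : Type*} [CommRing R] {V W A : Type*} [AddCommGroup V] [Module R V]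
  [AddCommGroup W] [Module R W] [AddCommGroup A] [Module R A]

/-- If `f : W → V` factors as `W ≃ M × N → N → V`, the last arrow being `g`, then the cokernel of
the transpose of `f` is that of `g` plus the full dual of `M`. -/
noncomputable def quotientRangeLcompEquivProd {M N : Type*} [AddCommGroup M] [Module R M]
    [AddCommGroup N] [Module R N] (e : W ≃ₗ[R] M × N) (g : N →ₗ[R] V) :
    ((W →ₗ[R] A) ⧸ range (lcomp R A (g ∘ₗ snd R M N ∘ₗ e.toLinearMap))) ≃ₗ[R]
      (M →ₗ[R] A) × ((N →ₗ[R] A) ⧸ range (lcomp R A g)) :=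
  let Φ : (W →ₗ[R] A) →ₗ[R] (M →ₗ[R] A) × ((N →ₗ[R] A) ⧸ range (lcomp R A g)) :=
    (lcomp R A (e.symm.toLinearMap ∘ₗ inl R M N)).prod
      ((range (lcomp R A g)).mkQ ∘ₗ lcomp R A (e.symm.toLinearMap ∘ₗ inr R M N))
  have Φ_surjective : Function.Surjective Φ := by
    rintro ⟨α, β⟩
    obtain ⟨β, rfl⟩ := Submodule.mkQ_surjective _ β
    exact ⟨α.coprod β ∘ₗ e.toLinearMap, Prod.ext (by ext; simp [Φ])
      (congrArg (range (lcomp R A g)).mkQ (by ext; simp))⟩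
  have ker_Φ : range (lcomp R A (g ∘ₗ snd R M N ∘ₗ e.toLinearMap)) = ker Φ := by
    ext φ
    simp only [Φ, ker_prod, ker_comp, Submodule.ker_mkQ, Submodule.mem_inf, LinearMap.mem_ker,
      Submodule.mem_comap, LinearMap.mem_range]
    constructor
    · rintro ⟨ψ, rfl⟩
      exact ⟨by ext; simp, ψ, by ext; simp⟩
    · rintro ⟨φ_inl, ψ, hψ⟩
      refine ⟨ψ, LinearMap.ext fun w => ?_⟩
      obtain ⟨⟨x, y⟩, rfl⟩ := e.symm.surjective w
      have hx : φ (e.symm (x, 0)) = 0 := LinearMap.congr_fun φ_inl x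
      have hy : ψ (g y) = φ (e.symm (0, y)) := LinearMap.congr_fun hψ y
      have hxy : φ (e.symm (x, y)) = φ (e.symm (x, 0)) + φ (e.symm (0, y)) := by
        rw [← map_add, ← map_add, Prod.mk_add_mk, add_zero, zero_add]
      simp [hxy, hx, hy]
  Submodule.quotEquivOfEq _ _ ker_Φ ≪≫ₗ Φ.quotKerEquivOfSurjective Φ_surjective

theorem exists_equiv_ker_prod_range (f : W →ₗ[R] V) [Projective R (range f)] :
    ∃ e : W ≃ₗ[R] ker f × range f,
      (range f).subtype ∘ₗ snd R (ker f) (range f) ∘ₗ e.toLinearMap = f := by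
  obtain ⟨s, hs⟩ := f.rangeRestrict.exists_rightInverse_of_surjective f.range_rangeRestrict
  have exact : Function.Exact (ker f).subtype f.rangeRestrict := by
    rw [exact_iff, ker_rangeRestrict, Submodule.range_subtype]
  obtain ⟨e, -, he⟩ := exact.splitSurjectiveEquiv (ker f).subtype_injective ⟨s, hs⟩
  exact ⟨e, by rw [← he, subtype_comp_codRestrict]⟩

/-- Once bases are chosen, `M →ₗ A` and `A ⊗ V` are both families in `A` indexed by `ι`. -/
noncomputable def homEquivTensor {ι M : Type*} [AddCommGroup M] [Module R M] [Fintype ι]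
    [DecidableEq ι] (c : Basis ι R M) (b : Basis ι R V) : (M →ₗ[R] A) ≃ₗ[R] A ⊗[R] V :=
  (c.constr R).symm ≪≫ₗ (Finsupp.linearEquivFunOnFinite R A ι).symm ≪≫ₗ
    (TensorProduct.equivFinsuppOfBasisRight b).symm

theorem homEquivTensor_apply {ι M : Type*} [AddCommGroup M] [Module R M] [Fintype ι]
    [DecidableEq ι] (c : Basis ι R M) (b : Basis ι R V) (φ : M →ₗ[R] A) :
    homEquivTensor c b φ = ∑ i, φ (c i) ⊗ₜ[R] b i := by
  simp [homEquivTensor, Finsupp.sum_fintype, Basis.constr]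

variable [IsDomain R] [Module.Finite R V]

theorem finrank_eq_of_isTorsion_quotient (N : Submodule R V) (hN : Module.IsTorsion R (V ⧸ N)) :
    finrank R N = finrank R V := by
  rw [← N.finrank_quotient_add_finrank, finrank_eq_zero_iff_isTorsion.2 hN, zero_add]

variable [IsPrincipalIdealRing R] [Free R V]

theorem nonempty_quotient_range_lcomp_subtype_equiv (N : Submodule R V)
    (hN : Module.IsTorsion R (V ⧸ N)) :
    Nonempty (((N →ₗ[R] A) ⧸ range (lcomp R A N.subtype)) ≃ₗ[R] A ⊗[R] (V ⧸ N)) := by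
  classical
  obtain ⟨b, a, c, hc⟩ := Submodule.exists_smith_normal_form_of_rank_eq (finBasis R V)
    (finrank_eq_of_isTorsion_quotient N hN)
  -- The scalars `a i` relating `c` to `b` can sit on either side of `⊗`, so restriction of
  -- homomorphisms to `N` corresponds to tensoring the inclusion of `N` with `A`.
  have restrict_eq_lTensor :
      (homEquivTensor c b).toLinearMap ∘ₗ lcomp R A N.subtype =
        N.subtype.lTensor A ∘ₗ (homEquivTensor b c).toLinearMap := by
    ext ψ
    simp [homEquivTensor_apply, hc, TensorProduct.smul_tmul]
  have map_range : (range (lcomp R A N.subtype)).map (homEquivTensor c b).toLinearMap =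
      range (N.subtype.lTensor A) := by
    rw [← range_comp, restrict_eq_lTensor, LinearEquiv.range_comp]
  exact ⟨Submodule.Quotient.equiv _ _ (homEquivTensor c b) map_range ≪≫ₗ
    lTensor.equiv A (exact_subtype_mkQ N) N.mkQ_surjective⟩

theorem nonempty_quotient_range_lcomp_equiv [Free R W] [Module.Finite R W] (f : W →ₗ[R] V)
    (hf : Module.IsTorsion R (V ⧸ range f)) :
    Nonempty (((W →ₗ[R] A) ⧸ range (lcomp R A f)) ≃ₗ[R]
      (Fin (finrank R W - finrank R V) → A) × (A ⊗[R] (V ⧸ range f))) := by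
  obtain ⟨e, he⟩ := exists_equiv_ker_prod_range f
  obtain ⟨torsionPart⟩ := nonempty_quotient_range_lcomp_subtype_equiv (A := A) (range f) hf
  have finrank_ker : finrank R (ker f) = finrank R W - finrank R V := by
    rw [← finrank_eq_of_isTorsion_quotient (range f) hf, e.finrank_eq, finrank_prod,
      Nat.add_sub_cancel]
  let freePart : (ker f →ₗ[R] A) ≃ₗ[R] (Fin (finrank R W - finrank R V) → A) :=
    ((finBasisOfFinrankEq R (ker f) finrank_ker).constr R).symm
  exact ⟨Submodule.quotEquivOfEq _ _ (by rw [he]) ≪≫ₗ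
    quotientRangeLcompEquivProd e (range f).subtype ≪≫ₗ freePart.prodCongr torsionPart⟩

end DualCokernel

section PreCocycle

variable {G A}

theorem isPreCocycle_iff (σ : G → G → A) :
    IsPreCocycle σ ↔ (∀ g, σ g 1 = σ 1 1) ∧
      (∀ g h, σ h (h⁻¹ * g⁻¹) + σ g g⁻¹ = σ g h + σ (g * h) (g * h)⁻¹) ∧
      ∀ g h, σ h⁻¹ g⁻¹ + σ g h + σ (g * h) (g * h)⁻¹ = σ g g⁻¹ + σ h h⁻¹ + σ 1 1 := by
  constructor
  · intro hσ
    have map_one_right (g : G) : σ g 1 = σ 1 1 := by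
      have := hσ g 1 1 (by simp)
      simp only [d2, mul_one] at this
      linear_combination (norm := abel1) -this
    have map_rotate (g h : G) :
        σ h (h⁻¹ * g⁻¹) + σ g g⁻¹ = σ g h + σ (g * h) (g * h)⁻¹ := by
      have := hσ g h (h⁻¹ * g⁻¹) (by simp [mul_assoc])
      simp only [d2, mul_inv_cancel_left] at this
      rw [mul_inv_rev]
      linear_combination (norm := abel1) this
    refine ⟨map_one_right, map_rotate, fun g h => ?_⟩
    have rotate_mul := map_rotate (g * h) h⁻¹
    have cocycle := hσ g h h⁻¹ (by simp)
    simp only [inv_inv, mul_inv_rev, mul_inv_cancel_left, mul_inv_cancel_right] at rotate_mul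
    simp only [d2, mul_inv_cancel, map_one_right] at cocycle
    rw [mul_inv_rev]
    linear_combination (norm := abel1) rotate_mul - cocycle
  · rintro ⟨map_one_right, map_rotate, map_reflect⟩ x y z hxyz
    have map_one_left (g : G) : σ 1 g = σ 1 1 := by
      simpa [map_one_right] using map_rotate g⁻¹ 1
    simp only [Set.mem_insert_iff, Set.mem_singleton_iff, eq_comm (a := (1 : G)),
      mul_eq_one_iff_eq_inv'] at hxyz
    rcases hxyz with rfl | rfl | rfl | rfl | rfl | rfl
    · simp [d2, map_one_left]
    · simp [d2, map_one_left, map_one_right]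
    · simp [d2, map_one_right]
    · have rotate := map_rotate z⁻¹ x
      have reflect := map_reflect z⁻¹ x
      simp only [inv_inv] at rotate reflect
      simp only [d2, mul_inv_cancel, map_one_left z]
      linear_combination (norm := abel1) rotate + reflect
    · have rotate := map_rotate (x * y) y⁻¹
      simp only [inv_inv, mul_inv_rev, mul_inv_cancel_left, mul_inv_cancel_right] at rotate
      have reflect := map_reflect x y
      simp only [mul_inv_rev] at reflect
      simp only [d2, mul_inv_cancel, map_one_right x]
      linear_combination (norm := abel1) rotate - reflect
    · have rotate := map_rotate x y
      simp only [mul_inv_rev] at rotate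
      simp only [d2, mul_inv_rev, mul_inv_cancel_left]
      linear_combination (norm := abel1) rotate

/-- The rotation `(g, h) ↦ (h, h⁻¹g⁻¹)` of order three. On triples `(g, h, (gh)⁻¹)` of product `1`
it permutes the entries cyclically. -/
def rotatePair : Equiv.Perm (G × G) where
  toFun p := (p.2, p.2⁻¹ * p.1⁻¹)
  invFun p := (p.2⁻¹ * p.1⁻¹, p.1)
  left_inv p := by simp
  right_inv p := by simp

/-- The reflection `(g, h) ↦ (h⁻¹, g⁻¹)` of order two. -/
def reflectPair (p : G × G) : G × G := (p.2⁻¹, p.1⁻¹)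

/-- The pairs `(g, h)` such that no entry of the triple `(g, h, gh)` is `1`. These are the pairs on
which `∼` is generated by `rotatePair` and `reflectPair`. -/
def IsNondegenerate (p : G × G) : Prop := p.1 ≠ 1 ∧ p.2 ≠ 1 ∧ p.1 * p.2 ≠ 1

theorem rotatePair_pow_three : (rotatePair : Equiv.Perm (G × G)) ^ 3 = 1 := by
  ext p <;> simp [rotatePair, pow_succ]

theorem reflectPair_reflectPair (p : G × G) : reflectPair (reflectPair p) = p := by
  simp [reflectPair]

theorem reflectPair_rotatePair (p : G × G) :
    reflectPair (rotatePair p) = rotatePair.symm (reflectPair p) := by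
  simp [reflectPair, rotatePair]

theorem eq_or_eq_of_sameCycle_rotatePair {p q : G × G} (h : rotatePair.SameCycle p q) :
    q = p ∨ q = rotatePair p ∨ q = rotatePair (rotatePair p) := by
  obtain ⟨i, rfl⟩ := h
  rw [zpow_eq_zpow_emod i (n := 3) (mod_cast rotatePair_pow_three)]
  have lower : 0 ≤ i % 3 := by omega
  have upper : i % 3 < 3 := by omega
  interval_cases i % 3
  · exact .inl rfl
  · exact .inr (.inl rfl)
  · exact .inr (.inr rfl)

theorem isNondegenerate_rotatePair {p : G × G} :
    IsNondegenerate (rotatePair p) ↔ IsNondegenerate p := by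
  have h_mul : p.2⁻¹ * p.1⁻¹ = 1 ↔ p.1 * p.2 = 1 := by rw [← mul_inv_rev, inv_eq_one]
  simp only [IsNondegenerate, rotatePair, Equiv.coe_fn_mk, mul_inv_cancel_left, inv_eq_one, h_mul,
    ne_eq]
  tauto

theorem isNondegenerate_reflectPair {p : G × G} :
    IsNondegenerate (reflectPair p) ↔ IsNondegenerate p := by
  simp [IsNondegenerate, reflectPair, ← mul_inv_rev, and_left_comm]

theorem eq_or_eq_or_eq_of_not_isNondegenerate {p : G × G} (hp : ¬ IsNondegenerate p) :
    (∃ h, p = (1, h)) ∨ (∃ g, p = (g, 1)) ∨ ∃ g, p = (g, g⁻¹) := by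
  obtain ⟨g, h⟩ := p
  simp only [IsNondegenerate, ne_eq, ← not_or, not_not] at hp
  rcases hp with rfl | rfl | hgh
  · exact .inl ⟨h, rfl⟩
  · exact .inr (.inl ⟨g, rfl⟩)
  · exact .inr (.inr ⟨g, by rw [mul_eq_one_iff_eq_inv'.1 hgh]⟩)

theorem pairRel_rotatePair {p : G × G} (hp : IsNondegenerate p) : pairRel G p (rotatePair p) :=
  .cyc p.1 p.2 hp.1 hp.2.1 (mt mul_eq_one_iff_eq_inv'.2 hp.2.2)

theorem pairRel_reflectPair {p : G × G} (hp : IsNondegenerate p) : pairRel G p (reflectPair p) :=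
  .swap p.1 p.2 hp.1 hp.2.1 (mt mul_eq_one_iff_eq_inv'.2 hp.2.2)

theorem pairRel.cases_isNondegenerate {p q : G × G} (h : pairRel G p q) :
    (¬ IsNondegenerate p ∧ ¬ IsNondegenerate q) ∨
      IsNondegenerate p ∧ (q = rotatePair p ∨ q = reflectPair p) := by
  rcases h with g | g | g | ⟨g, h, hg, hh, hgh⟩ | ⟨g, h, hg, hh, hgh⟩
  · simp [IsNondegenerate]
  · simp [IsNondegenerate]
  · simp [IsNondegenerate]
  · exact .inr ⟨⟨hg, hh, mt mul_eq_one_iff_eq_inv'.1 hgh⟩, .inl rfl⟩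
  · exact .inr ⟨⟨hg, hh, mt mul_eq_one_iff_eq_inv'.1 hgh⟩, .inr rfl⟩

theorem not_sameCycle_reflectPair {p : G × G} (hp : IsNondegenerate p) :
    ¬ rotatePair.SameCycle p (reflectPair p) := by
  obtain ⟨g, h⟩ := p
  obtain ⟨hg, hh, hgh⟩ := hp
  intro hcycle
  rcases eq_or_eq_of_sameCycle_rotatePair hcycle with eq | eq | eq
  · exact hgh (mul_eq_one_iff_eq_inv.2 (Prod.ext_iff.1 eq).1.symm)
  · exact hh (by simpa [reflectPair, rotatePair] using (Prod.ext_iff.1 eq).2)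
  · exact hg (by simpa [reflectPair, rotatePair] using (Prod.ext_iff.1 eq).1)

theorem sameCycle_or_sameCycle_reflectPair {p q : G × G}
    (h : Quot.mk (pairRel G) p = Quot.mk (pairRel G) q) (hq : IsNondegenerate q) :
    rotatePair.SameCycle p q ∨ rotatePair.SameCycle p (reflectPair q) := by
  let InOrbit (q : G × G) : Prop :=
    IsNondegenerate q → rotatePair.SameCycle p q ∨ rotatePair.SameCycle p (reflectPair q)
  have inOrbit_congr (q q' : G × G) (hqq' : pairRel G q q') : InOrbit q = InOrbit q' := by
    rcases hqq'.cases_isNondegenerate with ⟨hq, hq'⟩ | ⟨-, rfl | rfl⟩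
    · simp only [InOrbit, hq, hq', false_imp_iff]
    · simp only [InOrbit, isNondegenerate_rotatePair, reflectPair_rotatePair,
        Equiv.Perm.sameCycle_apply_right, Equiv.Perm.sameCycle_symm_apply_right]
    · simp only [InOrbit, isNondegenerate_reflectPair, reflectPair_reflectPair, or_comm]
  have inOrbit_eq : InOrbit p = InOrbit q := congrArg (Quot.lift InOrbit inOrbit_congr) h
  exact inOrbit_eq.mp (fun _ => .inl .rfl) hq

/-- The choice of orientation: `p` is positive if it is a rotation, rather than a rotation of the
reflection, of the representative `Quot.out` of its class. Meaningful for nondegenerate `p` only. -/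
def IsPositive (p : G × G) : Prop := rotatePair.SameCycle (Quot.mk (pairRel G) p).out p

theorem isPositive_out (ω : Quot (pairRel G)) : IsPositive ω.out := by
  rw [IsPositive, Quot.out_eq]

theorem isPositive_rotatePair {p : G × G} (hp : IsNondegenerate p) :
    IsPositive (rotatePair p) ↔ IsPositive p := by
  rw [IsPositive, ← Quot.sound (pairRel_rotatePair hp), Equiv.Perm.sameCycle_apply_right,
    IsPositive]

theorem isPositive_reflectPair {p : G × G} (hp : IsNondegenerate p) :
    IsPositive (reflectPair p) ↔ ¬ IsPositive p := by
  rw [IsPositive, ← Quot.sound (pairRel_reflectPair hp), IsPositive]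
  constructor
  · exact fun h_reflect h => not_sameCycle_reflectPair hp (h.symm.trans h_reflect)
  · exact (sameCycle_or_sameCycle_reflectPair (Quot.out_eq _) hp).resolve_left

theorem IsPreCocycle.eq_of_pairRel_of_not_isNondegenerate {σ : G → G → A} (hσ : IsPreCocycle σ)
    {p q : G × G} (h : pairRel G p q) (hp : ¬ IsNondegenerate p) : σ p.1 p.2 = σ q.1 q.2 := by
  obtain ⟨map_one_right, map_rotate, map_reflect⟩ := (isPreCocycle_iff σ).1 hσ
  rcases h with g | g | g | ⟨g, h, hg, hh, hgh⟩ | ⟨g, h, hg, hh, hgh⟩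
  · exact map_one_right g
  · simpa [map_one_right] using map_rotate g⁻¹ 1
  · simpa using map_reflect g g⁻¹
  · exact absurd ⟨hg, hh, mt mul_eq_one_iff_eq_inv'.1 hgh⟩ hp
  · exact absurd ⟨hg, hh, mt mul_eq_one_iff_eq_inv'.1 hgh⟩ hp

theorem IsPreCocycle.eq_zero_of_not_isNondegenerate {σ : G → G → A} (hσ : IsPreCocycle σ)
    (h_out : ∀ ω : Quot (pairRel G), σ ω.out.1 ω.out.2 = 0) {p : G × G}
    (hp : ¬ IsNondegenerate p) : σ p.1 p.2 = 0 := by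
  classical
  let σ₀ (p : G × G) : A := if IsNondegenerate p then 0 else σ p.1 p.2
  have σ₀_congr (p q : G × G) (hpq : pairRel G p q) : σ₀ p = σ₀ q := by
    rcases hpq.cases_isNondegenerate with ⟨hp, hq⟩ | ⟨hp, rfl | rfl⟩
    · simp only [σ₀, if_neg hp, if_neg hq]
      exact hσ.eq_of_pairRel_of_not_isNondegenerate hpq hp
    · simp only [σ₀, if_pos hp, if_pos (isNondegenerate_rotatePair.2 hp)]
    · simp only [σ₀, if_pos hp, if_pos (isNondegenerate_reflectPair.2 hp)]
  calc σ p.1 p.2 = σ₀ p := (if_neg hp).symm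
    _ = σ₀ (Quot.mk (pairRel G) p).out :=
      congrArg (Quot.lift σ₀ σ₀_congr) (Quot.out_eq (Quot.mk (pairRel G) p)).symm
    _ = 0 := by simp only [σ₀, h_out, ite_self]

theorem IsPreCocycle.eq_zero_of_out {σ : G → G → A} (hσ : IsPreCocycle σ)
    (h_out : ∀ ω : Quot (pairRel G), σ ω.out.1 ω.out.2 = 0) : σ = 0 := by
  obtain ⟨-, map_rotate, map_reflect⟩ := (isPreCocycle_iff σ).1 hσ
  have degenerate {p : G × G} (hp : ¬ IsNondegenerate p) : σ p.1 p.2 = 0 :=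
    hσ.eq_zero_of_not_isNondegenerate h_out hp
  have map_inv (g : G) : σ g g⁻¹ = 0 := degenerate (p := (g, g⁻¹)) (by simp [IsNondegenerate])
  have map_one : σ 1 1 = 0 := degenerate (p := (1, 1)) (by simp [IsNondegenerate])
  have zero_congr (p q : G × G) (hpq : pairRel G p q) : (σ p.1 p.2 = 0) = (σ q.1 q.2 = 0) := by
    rcases hpq.cases_isNondegenerate with ⟨hp, hq⟩ | ⟨-, rfl | rfl⟩
    · rw [degenerate hp, degenerate hq]
    · have rotate := map_rotate p.1 p.2
      rw [map_inv, map_inv, add_zero, add_zero] at rotate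
      rw [← rotate]
      rfl
    · have reflect := map_reflect p.1 p.2
      rw [map_inv, map_inv, map_inv, map_one, add_zero, add_zero, add_zero] at reflect
      change _ = (σ p.2⁻¹ p.1⁻¹ = 0)
      rw [eq_neg_iff_add_eq_zero.2 reflect, neg_eq_zero]
  ext g h
  have zero_eq := congrArg (Quot.lift (fun p : G × G => σ p.1 p.2 = 0) zero_congr)
    (Quot.out_eq (Quot.mk (pairRel G) (g, h)))
  exact zero_eq.mp (h_out _)

theorem isPreCocycle_sub_of_rotatePair_reflectPair {i : G → A} {τ : G × G → A}
    (i_inv : ∀ g, i g⁻¹ = i g) (τ_one_right : ∀ g, τ (g, 1) = i g + i 1)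
    (τ_rotatePair : ∀ p, τ (rotatePair p) = τ p)
    (τ_reflectPair : ∀ p, τ (reflectPair p) + τ p = i p.1 + i p.2 + i (p.1 * p.2) + i 1) :
    IsPreCocycle fun g h => τ (g, h) - i (g * h) := by
  have τ_inv (g : G) : τ (g, g⁻¹) = i g + i 1 := by
    simpa [rotatePair, τ_one_right, i_inv] using (τ_rotatePair (g, g⁻¹)).symm
  refine (isPreCocycle_iff _).2 ⟨fun g => ?_, fun g h => ?_, fun g h => ?_⟩
  · simp [τ_one_right]
  · have rotate : τ (h, h⁻¹ * g⁻¹) = τ (g, h) := τ_rotatePair (g, h)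
    simp only [rotate, τ_inv, mul_inv_cancel_left, mul_inv_cancel, i_inv]
    abel
  · have reflect : τ (h⁻¹, g⁻¹) = i g + i h + i (g * h) + i 1 - τ (g, h) :=
      eq_sub_of_add_eq (τ_reflectPair (g, h))
    simp only [reflect, ← mul_inv_rev, i_inv, mul_inv_cancel, τ_inv, τ_one_right, mul_one]
    abel

section Extension

/-- The value at `(g, g⁻¹)` of the pre-cocycle with the prescribed values `f`: a pre-cocycle takes
the same value at `(g, g⁻¹)` and at `(g⁻¹, g)`, so the choice of representative is immaterial. -/
def inverseValue {B : Type*} (f : Quot (pairRel G) → B) (g : G) : B := f (Quot.mk _ (g, g⁻¹))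

theorem inverseValue_inv {B : Type*} (f : Quot (pairRel G) → B) (g : G) :
    inverseValue f g⁻¹ = inverseValue f g := by
  simpa [inverseValue] using (congrArg f (Quot.sound (pairRel.inv g))).symm

variable (f : Quot (pairRel G) → A)

/-- The sum of the values of `rotationInvariant f` at a pair and its reflection. -/
def reflectionSum (p : G × G) : A :=
  inverseValue f p.1 + inverseValue f p.2 + inverseValue f (p.1 * p.2) + inverseValue f 1

theorem reflectionSum_rotatePair (p : G × G) :
    reflectionSum f (rotatePair p) = reflectionSum f p := by
  have inverseValue_mul : inverseValue f (p.2⁻¹ * p.1⁻¹) = inverseValue f (p.1 * p.2) := by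
    rw [← mul_inv_rev, inverseValue_inv]
  simp only [reflectionSum, rotatePair, Equiv.coe_fn_mk, mul_inv_cancel_left, inverseValue_mul,
    inverseValue_inv]
  abel

theorem reflectionSum_reflectPair (p : G × G) :
    reflectionSum f (reflectPair p) = reflectionSum f p := by
  simp only [reflectionSum, reflectPair, ← mul_inv_rev, inverseValue_inv, add_comm]

/-- The value of `rotationInvariant f` at the representative of a class. -/
noncomputable def outValue (ω : Quot (pairRel G)) : A := f ω + inverseValue f (ω.out.1 * ω.out.2)

open Classical in
/-- The function `(g, h) ↦ σ (g, h) + σ (gh, (gh)⁻¹)` for the pre-cocycle `σ` whose values at the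
representatives `Quot.out` are prescribed by `f`. By `isPreCocycle_iff` it is invariant under
rotation, and reflection acts on it by `a ↦ reflectionSum f p - a`. -/
noncomputable def rotationInvariant (p : G × G) : A :=
  if IsNondegenerate p then
    if IsPositive p then outValue f (Quot.mk _ p)
    else reflectionSum f p - outValue f (Quot.mk _ p)
  else f (Quot.mk _ p) + inverseValue f (p.1 * p.2)

theorem rotationInvariant_out (ω : Quot (pairRel G)) :
    rotationInvariant f ω.out = f ω + inverseValue f (ω.out.1 * ω.out.2) := by
  simp only [rotationInvariant, outValue, if_pos (isPositive_out ω), Quot.out_eq, ite_self]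

theorem rotationInvariant_one_right (g : G) :
    rotationInvariant f (g, 1) = inverseValue f g + inverseValue f 1 := by
  have class_eq := Quot.sound (pairRel.left g)
  simp [rotationInvariant, IsNondegenerate, class_eq, inverseValue, add_comm]

theorem rotationInvariant_one_left (g : G) :
    rotationInvariant f (1, g) = inverseValue f g + inverseValue f 1 := by
  have class_eq := Quot.sound (pairRel.right g)
  simp [rotationInvariant, IsNondegenerate, class_eq, inverseValue, add_comm]

theorem rotationInvariant_inv (g : G) :
    rotationInvariant f (g, g⁻¹) = inverseValue f g + inverseValue f 1 := by
  simp [rotationInvariant, IsNondegenerate, inverseValue]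

theorem rotationInvariant_rotatePair (p : G × G) :
    rotationInvariant f (rotatePair p) = rotationInvariant f p := by
  classical
  by_cases hp : IsNondegenerate p
  · simp only [rotationInvariant, isNondegenerate_rotatePair, isPositive_rotatePair hp,
      ← Quot.sound (pairRel_rotatePair hp), reflectionSum_rotatePair, if_pos hp]
  · rcases eq_or_eq_or_eq_of_not_isNondegenerate hp with ⟨h, rfl⟩ | ⟨g, rfl⟩ | ⟨g, rfl⟩
    · simpa [rotatePair, rotationInvariant_one_left] using rotationInvariant_inv f h
    · simp [rotatePair, rotationInvariant_one_left, rotationInvariant_one_right, inverseValue_inv]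
    · simp [rotatePair, rotationInvariant_inv, rotationInvariant_one_right, inverseValue_inv]

theorem rotationInvariant_reflectPair (p : G × G) :
    rotationInvariant f (reflectPair p) + rotationInvariant f p = reflectionSum f p := by
  classical
  by_cases hp : IsNondegenerate p
  · simp only [rotationInvariant, isNondegenerate_reflectPair, isPositive_reflectPair hp,
      ← Quot.sound (pairRel_reflectPair hp), reflectionSum_reflectPair, if_pos hp]
    by_cases h_positive : IsPositive p
    · simp only [h_positive, not_true, if_true, if_false, sub_add_cancel]
    · simp only [h_positive, not_false_eq_true, if_true, if_false, add_sub_cancel]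
  · rcases eq_or_eq_or_eq_of_not_isNondegenerate hp with ⟨h, rfl⟩ | ⟨g, rfl⟩ | ⟨g, rfl⟩
    · simp only [reflectionSum, reflectPair, inv_one, rotationInvariant_one_left,
        rotationInvariant_one_right, inverseValue_inv, one_mul]
      abel
    · simp only [reflectionSum, reflectPair, inv_one, rotationInvariant_one_left,
        rotationInvariant_one_right, inverseValue_inv, mul_one]
      abel
    · simp only [reflectionSum, reflectPair, inv_inv, rotationInvariant_inv, inverseValue_inv,
        mul_inv_cancel]
      abel

theorem exists_isPreCocycle_out_eq :
    ∃ σ : G → G → A, IsPreCocycle σ ∧ ∀ ω : Quot (pairRel G), σ ω.out.1 ω.out.2 = f ω :=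
  ⟨_, isPreCocycle_sub_of_rotatePair_reflectPair (inverseValue_inv f)
    (rotationInvariant_one_right f) (rotationInvariant_rotatePair f)
    (rotationInvariant_reflectPair f),
    fun ω => sub_eq_of_eq_add (rotationInvariant_out f ω)⟩

end Extension

end PreCocycle

section Coboundary

variable {G A}

/-- The coboundary `δ¹ζ(g, h) = ζ(h) - ζ(gh) + ζ(g)`. -/
def d1 (ζ : G → A) : G → G → A := fun g h => ζ h - ζ (g * h) + ζ g

theorem isPreCocycle_d1 (ζ : G → A) : IsPreCocycle (d1 ζ) := by
  intro x y z _
  simp only [d2, d1, mul_assoc]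
  abel

theorem map_d1 {B F : Type*} [AddCommGroup B] [FunLike F A B] [AddMonoidHomClass F A B] (φ : F)
    (ζ : G → A) (g h : G) : φ (d1 ζ g h) = d1 (φ ∘ ζ) g h := by
  simp only [d1, map_add, map_sub, Function.comp_apply]

variable (G A) in
/-- A pre-cocycle amounts to its values at the representatives `Quot.out` of the classes of `∼`. -/
noncomputable def preZ2EquivHom :
    preZ2 G A ≃+ ((Quot (pairRel G) →₀ ℤ) →ₗ[ℤ] A) :=
  let evalOut : preZ2 G A →+ (Quot (pairRel G) → A) :=
    { toFun σ ω := σ.1 ω.out.1 ω.out.2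
      map_zero' := rfl
      map_add' _ _ := rfl }
  have evalOut_injective : Function.Injective evalOut :=
    (injective_iff_map_eq_zero evalOut).2 fun σ hσ =>
      Subtype.ext (σ.2.eq_zero_of_out fun ω => congrFun hσ ω)
  have evalOut_surjective : Function.Surjective evalOut := fun f =>
    let ⟨σ, hσ, σ_out⟩ := exists_isPreCocycle_out_eq f
    ⟨⟨σ, hσ⟩, funext σ_out⟩
  (AddEquiv.ofBijective evalOut ⟨evalOut_injective, evalOut_surjective⟩).trans
    (Finsupp.llift A ℤ ℤ (Quot (pairRel G))).toAddEquiv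

theorem preZ2EquivHom_apply_single (σ : preZ2 G A) (ω : Quot (pairRel G)) :
    preZ2EquivHom G A σ (Finsupp.single ω 1) = σ.1 ω.out.1 ω.out.2 := by
  rw [preZ2EquivHom, AddEquiv.trans_apply]
  exact (Finsupp.linearCombination_single ..).trans (one_smul ..)

variable (G) in
/-- The map of free abelian groups whose transpose is `d1`, through `preZ2EquivHom`. -/
noncomputable def pairBoundary : (Quot (pairRel G) →₀ ℤ) →ₗ[ℤ] (G →₀ ℤ) :=
  Finsupp.linearCombination ℤ fun ω => d1 (fun g => Finsupp.single g 1) ω.out.1 ω.out.2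

theorem pairBoundary_single (ω : Quot (pairRel G)) :
    pairBoundary G (Finsupp.single ω 1) = d1 (fun g => Finsupp.single g 1) ω.out.1 ω.out.2 := by
  simp [pairBoundary]

theorem preZ2EquivHom_d1 (ψ : (G →₀ ℤ) →ₗ[ℤ] A) :
    preZ2EquivHom G A ⟨d1 fun g => ψ (Finsupp.single g 1), isPreCocycle_d1 _⟩ =
      ψ ∘ₗ pairBoundary G := by
  ext ω
  simp only [LinearMap.comp_apply, Finsupp.lsingle_apply, preZ2EquivHom_apply_single,
    pairBoundary_single, map_d1]
  rfl

theorem map_preZ2EquivHom_cobound2 :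
    ((cobound2 G A).addSubgroupOf (preZ2 G A)).map (preZ2EquivHom G A) =
      (LinearMap.range (LinearMap.lcomp ℤ A (pairBoundary G))).toAddSubgroup := by
  ext φ
  constructor
  · rintro ⟨⟨_, hσ⟩, ⟨ζ, rfl⟩, rfl⟩
    obtain ⟨ψ, rfl⟩ := (Finsupp.llift A ℤ ℤ G).symm.surjective ζ
    exact ⟨ψ, (preZ2EquivHom_d1 ψ).symm⟩
  · rintro ⟨ψ, rfl⟩
    exact ⟨_, ⟨_, rfl⟩, preZ2EquivHom_d1 ψ⟩

variable (G A) in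
/-- `pH²(G, A)` as the cokernel of the transpose of `pairBoundary G`. -/
noncomputable def preCohomologyEquiv :
    (preZ2 G A ⧸ (cobound2 G A).addSubgroupOf (preZ2 G A)) ≃+
      (((Quot (pairRel G) →₀ ℤ) →ₗ[ℤ] A) ⧸
        LinearMap.range (LinearMap.lcomp ℤ A (pairBoundary G))) :=
  QuotientAddGroup.congr _ _ (preZ2EquivHom G A) map_preZ2EquivHom_cobound2

variable (G) in
/-- The linear extension of the projection of `G` to its abelianization. -/
noncomputable def abelianizationMap : (G →₀ ℤ) →ₗ[ℤ] Additive (Abelianization G) :=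
  Finsupp.linearCombination ℤ fun g => Additive.ofMul (Abelianization.of g)

theorem abelianizationMap_single (g : G) :
    abelianizationMap G (Finsupp.single g 1) = Additive.ofMul (Abelianization.of g) := by
  simp [abelianizationMap]

theorem abelianizationMap_surjective : Function.Surjective (abelianizationMap G) := by
  intro a
  obtain ⟨g, hg⟩ := QuotientGroup.mk_surjective a.toMul
  exact ⟨Finsupp.single g 1, (abelianizationMap_single g).trans (congrArg Additive.ofMul hg)⟩

theorem abelianizationMap_comp_pairBoundary : abelianizationMap G ∘ₗ pairBoundary G = 0 := by
  ext ω
  simp only [LinearMap.comp_apply, Finsupp.lsingle_apply, pairBoundary_single, map_d1]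
  simp [d1, abelianizationMap_single]

theorem exists_comp_abelianizationMap_eq {φ : (G →₀ ℤ) →ₗ[ℤ] A}
    (hφ : φ ∘ₗ pairBoundary G = 0) :
    ∃ ψ : Additive (Abelianization G) →+ A, ψ.toIntLinearMap ∘ₗ abelianizationMap G = φ := by
  let ζ (g : G) : A := φ (Finsupp.single g 1)
  have d1_ζ : d1 ζ = 0 := (isPreCocycle_d1 ζ).eq_zero_of_out fun ω => by
    have := LinearMap.congr_fun hφ (Finsupp.single ω 1)
    rwa [LinearMap.comp_apply, pairBoundary_single, map_d1] at this
  have map_mul (g h : G) : ζ (g * h) = ζ g + ζ h := by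
    have : ζ h - ζ (g * h) + ζ g = 0 := congrFun₂ d1_ζ g h
    linear_combination (norm := abel1) -this
  let χ : G →* Multiplicative A := MonoidHom.mk' (fun g => Multiplicative.ofAdd (ζ g)) map_mul
  refine ⟨MonoidHom.toAdditiveLeft (Abelianization.lift χ), ?_⟩
  ext g
  simp only [LinearMap.comp_apply, Finsupp.lsingle_apply, abelianizationMap_single]
  rfl

theorem exact_pairBoundary_abelianizationMap :
    Function.Exact (pairBoundary G) (abelianizationMap G) := by
  rw [LinearMap.exact_iff]
  refine le_antisymm ?_ (LinearMap.range_le_ker_iff.2 abelianizationMap_comp_pairBoundary)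
  obtain ⟨ψ, hψ⟩ := exists_comp_abelianizationMap_eq (LinearMap.range_mkQ_comp (pairBoundary G))
  calc LinearMap.ker (abelianizationMap G)
      ≤ LinearMap.ker (ψ.toIntLinearMap ∘ₗ abelianizationMap G) := LinearMap.ker_le_ker_comp _ _
    _ = LinearMap.range (pairBoundary G) := by rw [hψ, Submodule.ker_mkQ]

variable (G) in
/-- The cokernel of `pairBoundary G` is the abelianization of `G`. -/
noncomputable def quotientRangePairBoundaryEquiv :
    ((G →₀ ℤ) ⧸ LinearMap.range (pairBoundary G)) ≃ₗ[ℤ] Additive (Abelianization G) :=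
  exact_pairBoundary_abelianizationMap.linearEquivOfSurjective abelianizationMap_surjective

theorem isTorsion_quotient_range_pairBoundary [Finite G] :
    Module.IsTorsion ℤ ((G →₀ ℤ) ⧸ LinearMap.range (pairBoundary G)) := by
  have : Finite (Additive (Abelianization G)) :=
    inferInstanceAs (Finite (G ⧸ commutator G))
  have : Finite ((G →₀ ℤ) ⧸ LinearMap.range (pairBoundary G)) :=
    .of_equiv _ (quotientRangePairBoundaryEquiv G).symm.toEquiv
  exact isAddTorsion_iff_isTorsion_int.1 isAddTorsion_of_finite

end Coboundary

/-- For a finite group `G` of order `n` and an abelian group `A`,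
`pH²(G,A) = pZ²(G,A)/B²(G,A)` is isomorphic to
`A^{m−n} ⊕ (A ⊗ G^{ab})`, where `m = |Ω|`. -/
theorem preCohomology_structure [Fintype G] :
    Nonempty
      ((preZ2 G A ⧸ (cobound2 G A).addSubgroupOf (preZ2 G A)) ≃+
        (Fin (Nat.card (Quot (pairRel G)) - Fintype.card G) → A) ×
          TensorProduct ℤ A (Additive (Abelianization G))) := by
  obtain ⟨dualCokernel⟩ := nonempty_quotient_range_lcomp_equiv (A := A) (pairBoundary G)
    isTorsion_quotient_range_pairBoundary
  rw [Module.finrank_eq_nat_card_basis Finsupp.basisSingleOne,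
    Module.finrank_eq_nat_card_basis Finsupp.basisSingleOne,
    Nat.card_eq_fintype_card (α := G)] at dualCokernel
  exact ⟨(preCohomologyEquiv G A).trans (dualCokernel ≪≫ₗ
    (LinearEquiv.refl ℤ _).prodCongr
      ((quotientRangePairBoundaryEquiv G).lTensor A)).toAddEquiv⟩
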